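/- Let n ∈ ℕ. For every x ∈ ℝ, lim_{α→∞} α^{n/2} P_n^{(−α,−α)}(x/√α) = (−i)^n H_n(ix) = Σ_{k=0}^{⌊n/2⌋} n!/(k!(n−2k)! 4^k) x^{n−2k}, the limit being taken along real α → +∞ (for all sufficiently large α the monic Jacobi polynomial P_n^{(−α,−α)} is defined); here H_n(ix) denotes the monic Hermite polynomial evaluated at ix in ℂ, and (−i)^n H_n(ix) is a real polynomial in x. -/

import Mathlib

open Finset Filter Topology

/-- Monic Laguerre polynomial `L_n^{(α)}(x)`. -/
noncomputable def lagP (n : ℕ) (α x : ℝ) : ℝ :=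
  ∑ k ∈ Finset.range (n + 1),
    (-1 : ℝ) ^ (n - k) * ((n.factorial : ℝ) / (k.factorial : ℝ)) *
      ((∏ j ∈ Finset.Icc (k + 1) n, (α + (j : ℝ))) / ((n - k).factorial : ℝ)) * x ^ k

/-- Pochhammer symbol `(a)_n = a (a+1) ⋯ (a+n−1)`. -/
noncomputable def poch (a : ℝ) (n : ℕ) : ℝ := ∏ j ∈ Finset.range n, (a + (j : ℝ))

/-- Monic Jacobi polynomial `P_n^{(α,β)}(x)`. -/
noncomputable def jacP (n : ℕ) (α β x : ℝ) : ℝ :=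
  (2 ^ n * (n.factorial : ℝ) / poch ((n : ℝ) + α + β + 1) n) *
    ∑ s ∈ Finset.range (n + 1),
      ((∏ j ∈ Finset.Icc (s + 1) n, (α + (j : ℝ))) / ((n - s).factorial : ℝ)) *
        ((∏ j ∈ Finset.Icc (n - s + 1) n, (β + (j : ℝ))) / (s.factorial : ℝ)) *
        ((x - 1) / 2) ^ s * ((x + 1) / 2) ^ (n - s)

/-- Monic Hermite polynomial, as a polynomial function on `ℂ`. -/
noncomputable def hermC (n : ℕ) (z : ℂ) : ℂ :=
  ∑ k ∈ Finset.range (n / 2 + 1),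
    (-1 : ℂ) ^ k *
      ((n.factorial : ℂ) / ((k.factorial : ℂ) * ((n - 2 * k).factorial : ℂ) * 4 ^ k)) *
      z ^ (n - 2 * k)

/-- Type I `X_m`-Laguerre exceptional orthogonal polynomial `L̂^{(I,m)}_n(x;α)`. -/
noncomputable def lagI (m n : ℕ) (α x : ℝ) : ℝ :=
  (-1 : ℝ) ^ m * (lagP m (α + 1) (-x) * lagP n α x
    - (n : ℝ) * lagP m α (-x) * lagP (n - 1) (α + 1) x)

/-- Type II `X_m`-Laguerre exceptional orthogonal polynomial `L̂^{(II,m)}_n(x;α)`. -/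
noncomputable def lagII (m n : ℕ) (α x : ℝ) : ℝ :=
  (1 / (α + (n : ℝ) - (m : ℝ))) *
    ((n : ℝ) * x * lagP m (-α) x * lagP (n - 1) (α + 1) x
      - ((m : ℝ) - α) * lagP m (-α - 1) x * lagP n α x)

/-- Type III `X_m`-Laguerre exceptional orthogonal polynomial `L̂^{(III,m)}_n(x;α)`. -/
noncomputable def lagIII (m n : ℕ) (α x : ℝ) : ℝ :=
  if n = 0 then 1 else
    (-1 : ℝ) ^ m * (lagP m (-α) (-x) * lagP (n - m) (α - 1) x
      - (m : ℝ) * x * lagP (m - 1) (-α + 1) (-x) * lagP (n - m - 1) α x)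

/-- Type I `X_m`-Jacobi exceptional orthogonal polynomial `P̂^{(I,m)}_n(x;α,β)`. -/
noncomputable def jacI (m n : ℕ) (α β x : ℝ) : ℝ :=
  (1 / (β + (n : ℝ) - (m : ℝ))) *
    (jacP m α (-β) x * ((n : ℝ) * (1 + x) * jacP (n - 1) (α + 1) (β + 1) x
        + β * jacP n α β x)
      - (m : ℝ) * (1 + x) * jacP (m - 1) (α + 1) (-β + 1) x * jacP n α β x)

/-- Type II `X_m`-Jacobi exceptional orthogonal polynomial `P̂^{(II,m)}_n(x;α,β)`. -/
noncomputable def jacII (m n : ℕ) (α β x : ℝ) : ℝ :=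
  (1 / ((m : ℝ) - (n : ℝ) - α)) *
    (jacP m (-α) β x * ((n : ℝ) * (1 - x) * jacP (n - 1) (α + 1) (β + 1) x
        - α * jacP n α β x)
      - (m : ℝ) * (1 - x) * jacP (m - 1) (-α + 1) (β + 1) x * jacP n α β x)

/-- Type III `X_m`-Jacobi exceptional orthogonal polynomial `P̂^{(III,m)}_n(x;α,β)`. -/
noncomputable def jacIII (m n : ℕ) (α β x : ℝ) : ℝ :=
  if n = 0 then 1 else
    (1 / (α + β + (n : ℝ) - 2 * (m : ℝ) - 1)) *
      ((α + β + (n : ℝ) - (m : ℝ) - 1) * jacP m (-α) (-β) x * jacP (n - m) (α - 1) (β - 1) x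
        + (m : ℝ) * (1 - x ^ 2) * jacP (m - 1) (-α + 1) (-β + 1) x * jacP (n - m - 1) α β x)

/-- Type III `X_m`-Hermite exceptional orthogonal polynomial `Ĥ^{(III,m)}_n(x)`
(a real polynomial, expressed via complex Hermite values). -/
noncomputable def hermIII (m n : ℕ) (x : ℝ) : ℂ :=
  if n = 0 then 1 else
    Complex.I ^ m * (hermC m (Complex.I * x) * hermC (n - m) (x : ℂ)
      + Complex.I * ((m : ℂ) / 2) * hermC (m - 1) (Complex.I * x) * hermC (n - m - 1) (x : ℂ))

open Polynomial in
lemma aux_coeff1 (N k : ℕ) (u : ℝ) :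
    ((1 + C u * X : ℝ[X]) ^ N).coeff k = (N.choose k : ℝ) * u ^ k := by
  have h : ((1 + C u * X : ℝ[X]) ^ N) = ((1 + X : ℝ[X]) ^ N).comp (C u * X) := by simp
  rw [h, comp_C_mul_X_coeff, coeff_one_add_X_pow]

open Polynomial in
lemma aux_coeff2 (m j : ℕ) (p q : ℝ) :
    ((C p + C q * X : ℝ[X]) ^ m).coeff j = (m.choose j : ℝ) * p ^ (m - j) * q ^ j := by
  have h : ((C p + C q * X : ℝ[X]) ^ m) = ((X + C p : ℝ[X]) ^ m).comp (C q * X) := by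
    simp [add_comm]
  rw [h, comp_C_mul_X_coeff, coeff_X_add_C_pow]
  ring

open Polynomial in
lemma aux_nat (N n : ℕ) (u v : ℝ) :
    ∑ s ∈ Finset.range (n + 1), (N.choose (n - s) : ℝ) * (N.choose s : ℝ) * u ^ s * v ^ (n - s)
    = ∑ m ∈ Finset.range (n + 1),
      (N.choose m : ℝ) * (m.choose (n - m) : ℝ) * (u + v) ^ (m - (n - m)) * (u * v) ^ (n - m) := by
  have h : ((1 + C u * X : ℝ[X]) ^ N) * ((1 + C v * X : ℝ[X]) ^ N)
      = (X * (C (u + v) + C (u * v) * X) + 1) ^ N := by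
    rw [← mul_pow]; congr 1; simp only [C_add, C_mul]; ring
  have h2 := congrArg (fun P => coeff P n) h
  simp only [coeff_mul] at h2
  rw [Finset.Nat.sum_antidiagonal_eq_sum_range_succ_mk, add_pow (X * _) _ N, finsetSum_coeff] at h2
  simp only [aux_coeff1] at h2
  have h3 : ∀ m, coeff ((X * (C (u + v) + C (u * v) * X)) ^ m * 1 ^ (N - m) * (N.choose m : ℝ[X])) n
      = if m ≤ n then (N.choose m : ℝ) * (m.choose (n - m) : ℝ) * (u + v) ^ (m - (n - m)) * (u * v) ^ (n - m) else 0 := by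
    intro m
    rw [one_pow, mul_one, mul_pow, coeff_mul_natCast, coeff_X_pow_mul', aux_coeff2]
    split_ifs <;> ring
  simp only [h3] at h2
  calc _ = _ := by
        refine Finset.sum_congr rfl fun s _ => ?_
        ring
    _ = _ := h2
    _ = ∑ m ∈ Finset.range (N + n + 1), _ := by
        refine Finset.sum_subset (fun i hi => ?_) (fun i _ hi => ?_)
        · simp only [Finset.mem_range] at *; omega
        · simp only [Finset.mem_range] at hi
          rw [Nat.choose_eq_zero_of_lt (by omega)]; simp
    _ = ∑ m ∈ Finset.range (n + 1), _ := by
        symm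
        refine Finset.sum_subset (fun i hi => ?_) (fun i _ hi => ?_)
        · simp only [Finset.mem_range] at *; omega
        · simp only [Finset.mem_range] at hi
          rw [if_neg (by omega)]
    _ = _ := by
        refine Finset.sum_congr rfl fun s hs => ?_
        simp only [Finset.mem_range] at hs
        rw [if_pos (by omega)]

lemma aux_choose (N m : ℕ) :
    (N.choose m : ℝ) = (descPochhammer ℝ m).eval (N : ℝ) / (m.factorial : ℝ) := by
  rw [descPochhammer_eval_eq_descFactorial, Nat.descFactorial_eq_factorial_mul_choose]
  push_cast
  field_simp

open Polynomial in
lemma aux_real (y : ℝ) (n : ℕ) (u v : ℝ) :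
    ∑ s ∈ Finset.range (n + 1), ((descPochhammer ℝ (n - s)).eval y / ((n - s).factorial : ℝ)) *
      ((descPochhammer ℝ s).eval y / (s.factorial : ℝ)) * u ^ s * v ^ (n - s)
    = ∑ m ∈ Finset.range (n + 1), ((descPochhammer ℝ m).eval y / (m.factorial : ℝ)) *
       (m.choose (n - m) : ℝ) * (u + v) ^ (m - (n - m)) * (u * v) ^ (n - m) := by
  have key : (∑ s ∈ Finset.range (n + 1), (descPochhammer ℝ (n - s) * C (((n - s).factorial : ℝ)⁻¹)) *
      (descPochhammer ℝ s * C ((s.factorial : ℝ)⁻¹)) * C (u ^ s) * C (v ^ (n - s)))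
    = ∑ m ∈ Finset.range (n + 1), (descPochhammer ℝ m * C ((m.factorial : ℝ)⁻¹)) *
       C (m.choose (n - m) : ℝ) * C ((u + v) ^ (m - (n - m))) * C ((u * v) ^ (n - m)) := by
    apply Polynomial.eq_of_infinite_eval_eq
    refine (Set.infinite_range_of_injective (Nat.cast_injective (R := ℝ))).mono ?_
    rintro _ ⟨N, rfl⟩
    have := aux_nat N n u v
    simp only [aux_choose N] at this
    simpa [eval_finsetSum, div_eq_mul_inv] using this
  have := congrArg (eval y) key
  simpa [eval_finsetSum, div_eq_mul_inv] using this

lemma aux_desc (y : ℝ) (m : ℕ) :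
    (descPochhammer ℝ m).eval y = ∏ j ∈ Finset.range m, (y - j) := by
  rw [descPochhammer_eval_eq_prod_range]

lemma aux_prod (a : ℝ) (n s : ℕ) (hs : s ≤ n) :
    ∏ j ∈ Finset.Icc (s + 1) n, (a + (j : ℝ)) = (descPochhammer ℝ (n - s)).eval (n + a) := by
  rw [aux_desc]
  symm
  refine Finset.prod_bij (fun j _ => n - j) ?_ ?_ ?_ ?_
  · intro j hj; simp only [Finset.mem_range, Finset.mem_Icc] at *; omega
  · intro i hi j hj h; simp only [Finset.mem_range] at *; omega
  · intro j hj; simp only [Finset.mem_Icc] at hj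
    exact ⟨n - j, by simp only [Finset.mem_range]; omega, by omega⟩
  · intro j hj; simp only [Finset.mem_range] at hj
    rw [Nat.cast_sub (by omega)]; ring

lemma aux_jac (n : ℕ) (a x : ℝ) :
    jacP n a a x = (2 ^ n * (n.factorial : ℝ) / poch ((n : ℝ) + a + a + 1) n) *
      ∑ k ∈ Finset.range (n / 2 + 1), (descPochhammer ℝ (n - k)).eval (n + a) *
        (1 / ((k.factorial : ℝ) * ((n - 2 * k).factorial : ℝ))) * x ^ (n - 2 * k) *
          ((x ^ 2 - 1) / 4) ^ k := by
  unfold jacP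
  congr 1
  have h := aux_real (n + a) n ((x - 1) / 2) ((x + 1) / 2)
  calc _ = _ := by
        refine Finset.sum_congr rfl fun s hs => ?_
        simp only [Finset.mem_range] at hs
        rw [aux_prod a n s (by omega), aux_prod a n (n - s) (by omega),
          show n - (n - s) = s by omega]
    _ = _ := h
    _ = _ := by
        rw [← Finset.sum_range_reflect]
        symm
        rw [show (x - 1) / 2 + (x + 1) / 2 = x by ring,
          show (x - 1) / 2 * ((x + 1) / 2) = (x ^ 2 - 1) / 4 by ring]
        refine Finset.sum_subset_zero_on_sdiff (fun i hi => ?_) (fun i hi => ?_) (fun k hk => ?_)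
        · simp only [Finset.mem_range] at *; omega
        · simp only [Finset.mem_range, Finset.mem_sdiff] at hi
          rw [Nat.choose_eq_zero_of_lt (by omega)]; simp
        · simp only [Finset.mem_range] at hk
          rw [show n + 1 - 1 - k = n - k by omega, show n - (n - k) = k by omega,
            show n - k - k = n - 2 * k by omega, Nat.cast_choose ℝ (show k ≤ n - k by omega),
            show n - k - k = n - 2 * k by omega]
          field_simp

lemma aux_lim (c d : ℝ) :
    Tendsto (fun α : ℝ => (c + d * α) / α) atTop (𝓝 d) := by
  have h : Tendsto (fun α : ℝ => c * α⁻¹ + d) atTop (𝓝 (c * 0 + d)) :=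
    (tendsto_inv_atTop_zero.const_mul c).add_const d
  rw [mul_zero, zero_add] at h
  refine h.congr' ?_
  filter_upwards [eventually_gt_atTop 0] with α hα
  field_simp

lemma aux_lim_desc (c : ℝ) (m : ℕ) :
    Tendsto (fun α : ℝ => (descPochhammer ℝ m).eval (c + -α) / α ^ m) atTop (𝓝 ((-1) ^ m)) := by
  have h : Tendsto (fun α : ℝ => ∏ j ∈ Finset.range m, ((c - j) + (-1) * α) / α) atTop
      (𝓝 (∏ j ∈ Finset.range m, (-1 : ℝ))) :=
    tendsto_finsetProd _ fun j _ => aux_lim _ _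
  simp only [Finset.prod_const, Finset.card_range] at h
  refine h.congr fun α => ?_
  rw [aux_desc, Finset.prod_div_distrib, Finset.prod_const, Finset.card_range]
  congr 1
  refine Finset.prod_congr rfl fun j _ => by ring

lemma aux_lim_poch (n : ℕ) :
    Tendsto (fun α : ℝ => poch ((n : ℝ) + -α + -α + 1) n / α ^ n) atTop (𝓝 ((-2) ^ n)) := by
  have h : Tendsto (fun α : ℝ => ∏ j ∈ Finset.range n, (((n : ℝ) + 1 + j) + (-2) * α) / α) atTop
      (𝓝 (∏ j ∈ Finset.range n, (-2 : ℝ))) :=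
    tendsto_finsetProd _ fun j _ => aux_lim _ _
  simp only [Finset.prod_const, Finset.card_range] at h
  refine h.congr fun α => ?_
  rw [poch, Finset.prod_div_distrib, Finset.prod_const, Finset.card_range]
  congr 1
  refine Finset.prod_congr rfl fun j _ => by ring

lemma aux_main (n : ℕ) (x : ℝ) :
    Tendsto (fun α : ℝ => α ^ ((n : ℝ) / 2) * jacP n (-α) (-α) (x / Real.sqrt α))
        atTop
        (𝓝 (∑ k ∈ Finset.range (n / 2 + 1),
          (n.factorial : ℝ) / ((k.factorial : ℝ) * ((n - 2 * k).factorial : ℝ) * 4 ^ k)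
            * x ^ (n - 2 * k))) := by
  have hq : Tendsto (fun α : ℝ => (x ^ 2 * α⁻¹ - 1) / 4) atTop (𝓝 ((x ^ 2 * 0 - 1) / 4)) :=
    ((tendsto_inv_atTop_zero.const_mul _).sub_const 1).div_const 4
  have h : Tendsto (fun α : ℝ => ∑ k ∈ Finset.range (n / 2 + 1),
      2 ^ n * (n.factorial : ℝ) / (poch ((n : ℝ) + -α + -α + 1) n / α ^ n) *
      ((descPochhammer ℝ (n - k)).eval (n + -α) / α ^ (n - k)) *
        (1 / ((k.factorial : ℝ) * ((n - 2 * k).factorial : ℝ))) * x ^ (n - 2 * k) *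
          ((x ^ 2 * α⁻¹ - 1) / 4) ^ k) atTop
      (𝓝 (∑ k ∈ Finset.range (n / 2 + 1),
      2 ^ n * (n.factorial : ℝ) / ((-2) ^ n) * ((-1) ^ (n - k)) *
        (1 / ((k.factorial : ℝ) * ((n - 2 * k).factorial : ℝ))) * x ^ (n - 2 * k) *
          ((x ^ 2 * 0 - 1) / 4) ^ k)) := by
    refine tendsto_finsetSum _ fun k _ => ?_
    exact ((((tendsto_const_nhds.div (aux_lim_poch n) (by simp)).mul
      (aux_lim_desc n (n - k))).mul_const _).mul_const _).mul (hq.pow k)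
  convert h.congr' ?_ using 2
  · refine Finset.sum_congr rfl fun k hk => ?_
    simp only [Finset.mem_range] at hk
    obtain ⟨m, rfl⟩ : ∃ m, n = m + 2 * k := ⟨n - 2 * k, by omega⟩
    rw [show m + 2 * k - 2 * k = m by omega, show m + 2 * k - k = m + k by omega,
      show (-2 : ℝ) = (-1) * 2 by norm_num, mul_pow,
      show (x ^ 2 * 0 - 1) / 4 = (-1) / (4 : ℝ) by ring, div_pow]
    have e : (-1 : ℝ) ^ (m + 2 * k) = (-1) ^ (m + k) * (-1) ^ k := by
      rw [← pow_add]; congr 1; ring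
    rw [e]
    rcases neg_one_pow_eq_or ℝ (m + k) with h1 | h1 <;>
    rcases neg_one_pow_eq_or ℝ k with h2 | h2 <;> rw [h1, h2] <;> field_simp <;> norm_num
  · filter_upwards [eventually_gt_atTop 0] with α hα
    rw [aux_jac, Finset.mul_sum, Finset.mul_sum]
    refine Finset.sum_congr rfl fun k hk => ?_
    simp only [Finset.mem_range] at hk
    obtain ⟨m, rfl⟩ : ∃ m, n = m + 2 * k := ⟨n - 2 * k, by omega⟩
    obtain ⟨r, hr, rfl⟩ : ∃ r : ℝ, 0 < r ∧ α = r ^ 2 :=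
      ⟨√α, Real.sqrt_pos.2 hα, (Real.sq_sqrt hα.le).symm⟩
    have e1 : (r ^ 2) ^ (((m + 2 * k : ℕ) : ℝ) / 2) = r ^ (m + 2 * k) := by
      rw [← Real.rpow_natCast r 2, ← Real.rpow_mul hr.le, ← Real.rpow_natCast r (m + 2 * k)]
      congr 1
      push_cast; ring
    rw [e1, Real.sqrt_sq hr.le, show m + 2 * k - 2 * k = m by omega,
      show m + 2 * k - k = m + k by omega, div_pow x r m, div_pow x r 2]
    generalize (descPochhammer ℝ (m + k)).eval _ = D
    generalize poch _ _ = Q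
    rw [show x ^ 2 * (r ^ 2)⁻¹ = x ^ 2 / r ^ 2 by rw [div_eq_mul_inv]]
    generalize ((x ^ 2 / r ^ 2 - 1) / 4) ^ k = E
    have hr' := hr.ne'
    rw [div_div_eq_mul_div]
    have e2 : (r ^ 2) ^ (m + 2 * k) / (r ^ 2) ^ (m + k) = r ^ (m + 2 * k) / r ^ m := by
      rw [div_eq_div_iff (by positivity) (by positivity)]; ring
    calc _ = 2 ^ (m + 2 * k) * ((m + 2 * k).factorial : ℝ) / Q * D *
          (1 / ((k.factorial : ℝ) * (m.factorial : ℝ))) * x ^ m * E *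
          ((r ^ 2) ^ (m + 2 * k) / (r ^ 2) ^ (m + k)) := by ring
      _ = _ := by rw [e2]; ring

theorem stmt17 (n : ℕ) (x : ℝ) :
    Filter.Tendsto (fun α : ℝ => α ^ ((n : ℝ) / 2) * jacP n (-α) (-α) (x / Real.sqrt α))
        Filter.atTop
        (nhds (∑ k ∈ Finset.range (n / 2 + 1),
          (n.factorial : ℝ) / ((k.factorial : ℝ) * ((n - 2 * k).factorial : ℝ) * 4 ^ k)
            * x ^ (n - 2 * k))) ∧
      ((∑ k ∈ Finset.range (n / 2 + 1),
          (n.factorial : ℝ) / ((k.factorial : ℝ) * ((n - 2 * k).factorial : ℝ) * 4 ^ k)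
            * x ^ (n - 2 * k) : ℝ) : ℂ)
        = (-Complex.I) ^ n * hermC n (Complex.I * x) := by
  refine ⟨aux_main n x, ?_⟩
  rw [hermC, Finset.mul_sum]
  push_cast
  refine Finset.sum_congr rfl fun k hk => ?_
  simp only [Finset.mem_range] at hk
  obtain ⟨m, rfl⟩ : ∃ m, n = m + 2 * k := ⟨n - 2 * k, by omega⟩
  rw [show m + 2 * k - 2 * k = m by omega]
  have e1 : (-Complex.I) ^ (m + 2 * k) * (-1) ^ k * Complex.I ^ m = 1 := by
    rw [pow_add, pow_mul, neg_sq, Complex.I_sq, mul_assoc ((-Complex.I) ^ m), ← mul_pow,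
      mul_right_comm, ← mul_pow]
    simp
  rw [mul_pow]
  linear_combination (-((m + 2 * k).factorial : ℂ) /
    ((k.factorial : ℂ) * (m.factorial : ℂ) * 4 ^ k) * (x : ℂ) ^ m) * e1
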